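/- Let f : ℝ → E be smooth with f'(s) ≠ 0 for all s, let h : ℝ → E be smooth, and set r(s) = ‖f'(s)‖ and t(s) = f'(s)/r(s). For the variation f_ε = f + ε h, the derivative at ε = 0 of the unit tangent satisfies ∂/∂ε|_{ε=0} (f_ε'(s)/‖f_ε'(s)‖) = D_s h (s) − ⟨D_s h (s), t(s)⟩ t(s), where D_s h = h'/r is the arc-length derivative. (This identifies the variation of the unit tangent δt with the normal component D_s h^⊥ of the arc-length derivative of the variation.) -/

import Mathlib

/-!
Since `f` and `h` are differentiable, `f_ε'(s) = f'(s) + ε h'(s)` is an affine function of `ε`, so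
the claim reduces to differentiating `ε ↦ (a + ε b) / ‖a + ε b‖` at `0` for fixed vectors `a ≠ 0`
and `b` (`hasDerivAt_normalize_line`); there the product rule applies, with
`d/dε ‖a + ε b‖ = ⟪a, b⟫ / ‖a‖` at `ε = 0`.
-/

open scoped RealInnerProductSpace

noncomputable section

local notation "E" => EuclideanSpace ℝ (Fin 3)

/-- First variation of normalization along a line: the differential of `v ↦ v / ‖v‖` at `a ≠ 0`
is `‖a‖⁻¹` times the orthogonal projection onto the complement of `a`. -/
lemma hasDerivAt_normalize_line (a b : E) (ha : a ≠ 0) :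
    HasDerivAt (fun ε : ℝ => ‖a + ε • b‖⁻¹ • (a + ε • b))
      (‖a‖⁻¹ • b - ⟪‖a‖⁻¹ • b, ‖a‖⁻¹ • a⟫ • ‖a‖⁻¹ • a) 0 := by
  have hn : ‖a‖ ≠ 0 := norm_ne_zero_iff.mpr ha
  have h1 : HasDerivAt (fun ε : ℝ => a + ε • b) b 0 := by
    simpa using ((hasDerivAt_id (0 : ℝ)).smul_const b).const_add a
  -- The norm is differentiated as the square root of its (polynomial) square.
  have h2 : HasDerivAt (fun ε : ℝ => ‖a + ε • b‖) (⟪a, b⟫ / ‖a‖) 0 := by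
    have h3 := h1.norm_sq.sqrt (by simpa using ha)
    simp only [Real.sqrt_sq (norm_nonneg _), zero_smul, add_zero] at h3
    convert h3 using 1
    field_simp
  have h4 := (h2.fun_inv (by simpa using hn)).fun_smul h1
  simp only [zero_smul, add_zero] at h4
  refine h4.congr_deriv (Eq.symm ?_)
  rw [sub_eq_add_neg, ← neg_smul, smul_smul, real_inner_smul_left, real_inner_smul_right,
    real_inner_comm]
  congr 2
  field_simp

/-- For a variation `f_ε = f + ε h` of a regular curve `f`, the variation of the
unit tangent is the normal component of the arc-length derivative of the
variation: `δt = D_s h - ⟨D_s h, t⟩ t`, where `D_s h = h'/r` and `t = f'/‖f'‖`. -/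
theorem variation_of_unit_tangent_general
    (f h : ℝ → E) (hf : ContDiff ℝ (⊤ : ℕ∞) f) (hh : ContDiff ℝ (⊤ : ℕ∞) h)
    (hreg : ∀ s, deriv f s ≠ 0)
    (r : ℝ → ℝ) (hr : ∀ s, r s = ‖deriv f s‖)
    (t : ℝ → E) (ht : ∀ s, t s = (r s)⁻¹ • deriv f s)
    (s : ℝ) :
    deriv (fun ε : ℝ => ‖deriv (fun x => f x + ε • h x) s‖⁻¹
            • deriv (fun x => f x + ε • h x) s) 0
      = (r s)⁻¹ • deriv h s - ⟪(r s)⁻¹ • deriv h s, t s⟫ • t s := by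
  have hdf : DifferentiableAt ℝ f s := hf.differentiable (by simp) s
  have hdh : DifferentiableAt ℝ h s := hh.differentiable (by simp) s
  have key : ∀ ε : ℝ, deriv (fun x => f x + ε • h x) s = deriv f s + ε • deriv h s := fun ε =>
    (hdf.hasDerivAt.add (hdh.hasDerivAt.const_smul ε)).deriv
  simp only [key, ht, hr]
  exact (hasDerivAt_normalize_line _ _ (hreg s)).deriv
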